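/- Let p₁ ∈ ℤ with p₁ ≠ 0, let κ ∈ ℝ with κ ≥ |p₁|, and set p = (p₁, 0). For a = (a₁, a₂) ∈ ℤ² with a₂ ≠ 0, set ρ_k = 1/|p|_κ² − 1/|a + kp|_κ² and let M_a be the bounded linear operator on ℓ²(ℤ, ℂ) given by (M_a ω)_k = ρ_{k+1} ω_{k+1} − ρ_{k−1} ω_{k−1}. Then the spectrum of M_a is contained in the imaginary axis: every λ in the spectrum of M_a satisfies Re λ = 0. (Linear stability of the shear flow with vorticity 2Γcos(p₁x₁) on the domain [0,2π)×[0,2π/κ).) -/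

import Mathlib

/-- The translation `(lpShift n ω)_k = ω_{k+n}` on `ℓ²(ℤ, ℂ)`. -/
noncomputable def lpShift (n : ℤ) : lp (fun _ : ℤ => ℂ) 2 →ₗ[ℂ] lp (fun _ : ℤ => ℂ) 2 where
  toFun ω := ⟨fun k => ω (k + n), by
    have h := (memℓp_gen_iff (p := 2) (by norm_num)).1 (lp.memℓp ω)
    exact memℓp_gen (h.comp_injective (add_left_injective n))⟩
  map_add' _ _ := rfl
  map_smul' _ _ := rfl

theorem lpShift_apply (n : ℤ) (ω : lp (fun _ : ℤ => ℂ) 2) (k : ℤ) :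
    lpShift n ω k = ω (k + n) := rfl

theorem inner_lpShift_left (n : ℤ) (x y : lp (fun _ : ℤ => ℂ) 2) :
    inner ℂ (lpShift n x) y = inner ℂ x (lpShift (-n) y) := by
  rw [lp.inner_eq_tsum, lp.inner_eq_tsum, ← (Equiv.addRight (-n)).tsum_eq]
  simp [lpShift_apply]

/-- The symmetric operator `ω ↦ i (ω_{k+1} - ω_{k-1})`. -/
noncomputable def lpDifference : lp (fun _ : ℤ => ℂ) 2 →ₗ[ℂ] lp (fun _ : ℤ => ℂ) 2 :=
  Complex.I • (lpShift 1 - lpShift (-1))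

theorem lpDifference_isSymmetric : lpDifference.IsSymmetric := by
  intro x y
  simp only [lpDifference, LinearMap.smul_apply, LinearMap.sub_apply, inner_smul_left,
    inner_smul_right, inner_sub_left, inner_sub_right, inner_lpShift_left, Complex.conj_I, neg_neg]
  ring

/-- Multiplication by a bounded real sequence on `ℓ²(ℤ, ℂ)`. -/
noncomputable def lpDiagonal (s : ℤ → ℝ) (C : ℝ) (hs : ∀ k, |s k| ≤ C) :
    lp (fun _ : ℤ => ℂ) 2 →ₗ[ℂ] lp (fun _ : ℤ => ℂ) 2 where
  toFun ω := ⟨fun k => (s k : ℂ) * ω k, by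
    have h := (memℓp_gen_iff (p := 2) (by norm_num)).1 (lp.memℓp ω)
    refine memℓp_gen ((h.mul_left (C ^ 2)).of_nonneg_of_le (fun k => by positivity) fun k => ?_)
    simp only [ENNReal.toReal_ofNat, Real.rpow_ofNat, norm_mul, Complex.norm_real,
      Real.norm_eq_abs, mul_pow]
    gcongr
    exact hs k⟩
  map_add' x y := by
    ext k
    exact mul_add _ _ _
  map_smul' c x := by
    ext k
    exact mul_left_comm _ _ _

theorem lpDiagonal_apply (s : ℤ → ℝ) (C : ℝ) (hs : ∀ k, |s k| ≤ C)
    (ω : lp (fun _ : ℤ => ℂ) 2) (k : ℤ) : lpDiagonal s C hs ω k = (s k : ℂ) * ω k := rfl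

theorem lpDiagonal_isSymmetric (s : ℤ → ℝ) (C : ℝ) (hs : ∀ k, |s k| ≤ C) :
    (lpDiagonal s C hs).IsSymmetric := by
  intro x y
  rw [lp.inner_eq_tsum, lp.inner_eq_tsum]
  congr 1
  ext k
  simp only [lpDiagonal_apply, RCLike.inner_apply, map_mul, Complex.conj_ofReal]
  ring

/-- If `J` and `S` are self-adjoint, then `J * S * S` has real spectrum. -/
theorem im_eq_zero_of_mem_spectrum_mul_mul_self {A : Type*} [CStarAlgebra A] {J S : A}
    (hJ : IsSelfAdjoint J) (hS : IsSelfAdjoint S) {z : ℂ} (hz : z ∈ spectrum ℂ (J * S * S)) :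
    z.im = 0 := by
  by_cases h0 : z = 0
  · simp [h0]
  have h : z ∈ spectrum ℂ (S * (J * S)) \ {0} := by
    rw [← spectrum.nonzero_mul_comm]
    exact ⟨hz, h0⟩
  have hT : IsSelfAdjoint (S * (J * S)) := by
    simp only [isSelfAdjoint_iff, star_mul, hJ.star_eq, hS.star_eq, mul_assoc]
  exact hT.im_eq_zero_of_mem_spectrum h.1

/-- The operator `(M ω)_k = ρ_{k+1} ω_{k+1} - ρ_{k-1} ω_{k-1}` with a bounded non-negative
sequence `ρ` has spectrum contained in the imaginary axis. -/
theorem re_eq_zero_of_mem_spectrum_of_nonneg (ρ : ℤ → ℝ) (C : ℝ) (h0 : ∀ k, 0 ≤ ρ k)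
    (hC : ∀ k, ρ k ≤ C) (M : lp (fun _ : ℤ => ℂ) 2 →L[ℂ] lp (fun _ : ℤ => ℂ) 2)
    (hM : ∀ (ω : lp (fun _ : ℤ => ℂ) 2) (k : ℤ),
      (M ω) k = (ρ (k + 1) : ℂ) * ω (k + 1) - (ρ (k - 1) : ℂ) * ω (k - 1))
    {z : ℂ} (hz : z ∈ spectrum ℂ M) : z.re = 0 := by
  have hs : ∀ k, |√(ρ k)| ≤ √C := fun k => by
    rw [abs_of_nonneg (Real.sqrt_nonneg _)]
    exact Real.sqrt_le_sqrt (hC k)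
  let S := (lpDiagonal_isSymmetric _ _ hs).toSelfAdjoint
  let J := lpDifference_isSymmetric.toSelfAdjoint
  have hfact : Complex.I • M = J.1 * S.1 * S.1 := by
    ext ω k
    have hsq : ∀ j, ((√(ρ j) : ℝ) : ℂ) * (√(ρ j) : ℝ) = ρ j := fun j => by
      rw [← Complex.ofReal_mul, Real.mul_self_sqrt (h0 j)]
    change Complex.I * (M ω) k = Complex.I *
      ((√(ρ (k + 1)) : ℂ) * ((√(ρ (k + 1)) : ℂ) * ω (k + 1)) -
        (√(ρ (k - 1)) : ℂ) * ((√(ρ (k - 1)) : ℂ) * ω (k - 1)))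
    rw [hM, ← mul_assoc (√(ρ (k + 1)) : ℂ), ← mul_assoc (√(ρ (k - 1)) : ℂ), hsq, hsq]
  have hIz : Complex.I * z ∈ spectrum ℂ (Complex.I • M) := by
    have h := spectrum.unit_smul_eq_smul M (Units.mk0 Complex.I Complex.I_ne_zero)
    change spectrum ℂ (Complex.I • M) = _ at h
    rw [h]
    exact Set.smul_mem_smul_set hz
  rw [hfact] at hIz
  simpa using im_eq_zero_of_mem_spectrum_mul_mul_self J.2 S.2 hIz


/-- Linear stability of the shear flow with vorticity `2Γcos(p₁x₁)` on
`[0,2π) × [0,2π/κ)` with `κ ≥ |p₁|`: for any class `a = (a₁, a₂)` with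
`a₂ ≠ 0`, the bounded operator `M_a` on `ℓ²(ℤ, ℂ)` given by
`(M_a ω)_k = ρ_{k+1} ω_{k+1} - ρ_{k-1} ω_{k-1}`, where
`ρ_k = 1/|p|_κ² - 1/|a + kp|_κ²` and `p = (p₁, 0)`, has spectrum contained in
the imaginary axis. -/
theorem shear_flow_class_operator_spectrum_imaginary
    (p₁ : ℤ) (hp : p₁ ≠ 0) (κ : ℝ) (hκ : |(p₁ : ℝ)| ≤ κ)
    (a₁ a₂ : ℤ) (ha : a₂ ≠ 0)
    (ρ : ℤ → ℝ)
    (hρ : ∀ k : ℤ, ρ k = 1 / ((p₁ : ℝ) ^ 2 + κ ^ 2 * (0 : ℝ) ^ 2)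
        - 1 / (((a₁ + k * p₁ : ℤ) : ℝ) ^ 2 + κ ^ 2 * ((a₂ : ℤ) : ℝ) ^ 2))
    (M : lp (fun _ : ℤ => ℂ) 2 →L[ℂ] lp (fun _ : ℤ => ℂ) 2)
    (hM : ∀ (ω : lp (fun _ : ℤ => ℂ) 2) (k : ℤ),
      (M ω) k = (ρ (k + 1) : ℂ) * ω (k + 1) - (ρ (k - 1) : ℂ) * ω (k - 1)) :
    ∀ z ∈ spectrum ℂ M, z.re = 0 := by
  have hp2 : (0 : ℝ) < (p₁ : ℝ) ^ 2 := by positivity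
  have hpκ : (p₁ : ℝ) ^ 2 ≤ κ ^ 2 := by
    rw [← sq_abs (p₁ : ℝ)]
    gcongr
  have ha2 : (1 : ℝ) ≤ (a₂ : ℝ) ^ 2 := by
    exact_mod_cast (by positivity : 0 < a₂ ^ 2)
  have hden : ∀ k : ℤ, (p₁ : ℝ) ^ 2 ≤
      ((a₁ + k * p₁ : ℤ) : ℝ) ^ 2 + κ ^ 2 * ((a₂ : ℤ) : ℝ) ^ 2 := fun k => by
    nlinarith [sq_nonneg ((a₁ + k * p₁ : ℤ) : ℝ), mul_le_mul_of_nonneg_left ha2 (sq_nonneg κ)]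
  refine fun z hz => re_eq_zero_of_mem_spectrum_of_nonneg ρ (1 / (p₁ : ℝ) ^ 2) (fun k => ?_)
    (fun k => ?_) M hM hz
  · rw [hρ, sub_nonneg, zero_pow two_ne_zero, mul_zero, add_zero]
    exact one_div_le_one_div_of_le hp2 (hden k)
  · rw [hρ, zero_pow two_ne_zero, mul_zero, add_zero]
    exact sub_le_self _ (by positivity)
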